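/- arXiv:2605.08337 — 2 statements merged into one kernel-verified Lean document; each statement's English description precedes it below -/
import Mathlib

section
/- Let (G_k)_{k=1}^N be arbitrary (not necessarily Hermitian) operators, with G_k acting on H_k, and let G = Σ_{k=1}^N (extension of G_k to H). Then for every density matrix ρ on H, the variance of G is bounded by Var_ρ(G) ≤ ((1/N)·Σ_{k=1}^N ‖G_k‖_∞²) · (N + 2N²·√((1/N)·Σ_{k=1}^N s_k)). -/
open scoped BigOperators Kronecker Matrix ComplexOrder

noncomputable section
namespace Paper

/-- A density matrix: a positive semidefinite operator of trace one. -/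
def IsDensityMatrix {n : Type*} [Fintype n] (ρ : Matrix n n ℂ) : Prop :=
  ρ.PosSemidef ∧ ρ.trace = 1

/-- The operator norm `‖A‖_∞` (largest singular value) of a matrix,
as the operator norm of the induced map on Euclidean space. -/
noncomputable def opNorm {n : Type*} [Fintype n] [DecidableEq n] (A : Matrix n n ℂ) : ℝ :=
  ‖LinearMap.toContinuousLinearMap (Matrix.toEuclideanLin A)‖

/-- Von Neumann entropy `−∑ λ ln λ` over the eigenvalues; since `Real.log 0 = 0`
in Mathlib, the convention `0 · ln 0 = 0` is automatic. -/
noncomputable def entropy {n : Type*} [Fintype n] [DecidableEq n] (σ : Matrix n n ℂ) : ℝ :=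
  if h : σ.IsHermitian then -∑ i, h.eigenvalues i * Real.log (h.eigenvalues i) else 0

/-- The variance `Var_ρ(A) = Tr[ρ A† A] − |Tr[ρ A]|²`. -/
noncomputable def variance {n : Type*} [Fintype n] (ρ A : Matrix n n ℂ) : ℝ :=
  (ρ * (Aᴴ * A)).trace.re - ‖(ρ * A).trace‖ ^ 2

/-- The trace norm `‖A‖₁ = Tr √(A†A)`: the sum of the singular values. -/
noncomputable def traceNorm {n : Type*} [Fintype n] [DecidableEq n] (A : Matrix n n ℂ) : ℝ :=
  ∑ i, Real.sqrt ((Matrix.posSemidef_conjTranspose_mul_self A).1.eigenvalues i)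

/-- The pure state `|v⟩⟨v|` associated with a vector `v`. -/
def pureState {n : Type*} (v : n → ℂ) : Matrix n n ℂ :=
  Matrix.of fun x y => v x * (starRingEnd ℂ) (v y)

/-- The expectation value `⟨v|M|v⟩`. -/
noncomputable def expval {n : Type*} [Fintype n] (M : Matrix n n ℂ) (v : n → ℂ) : ℂ :=
  ∑ x, ∑ y, (starRingEnd ℂ) (v x) * M x y * v y

variable {N : ℕ} {d : Fin N → Type*} [∀ k, Fintype (d k)] [∀ k, DecidableEq (d k)]

/-- Extension of a local operator on the `k`-th factor to the `N`-fold tensor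
product `H = H_1 ⊗ ⋯ ⊗ H_N`, tensoring with the identity on every other factor.
(The tensor product is realized with index set `∀ j, d j`.) -/
def extendAt (k : Fin N) (A : Matrix (d k) (d k) ℂ) : Matrix (∀ j, d j) (∀ j, d j) ℂ :=
  Matrix.of fun x y => if ∀ j, j ≠ k → x j = y j then A (x k) (y k) else 0

/-- Reduced density matrix on the `k`-th factor: partial trace over all other factors. -/
noncomputable def reduce (k : Fin N) (ρ : Matrix (∀ j, d j) (∀ j, d j) ℂ) :
    Matrix (d k) (d k) ℂ :=
  Matrix.of fun a b => ∑ x : ∀ j, d j, if x k = a then ρ x (Function.update x k b) else 0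

section StateInequalities

open scoped Matrix.Norms.L2Operator MatrixOrder

variable {n : Type*} [Fintype n] {ρ : Matrix n n ℂ}

/-- The covariance `Tr[ρ A† B] − conj(Tr[ρ A]) Tr[ρ B]`. -/
def covariance (ρ A B : Matrix n n ℂ) : ℂ :=
  (ρ * (Aᴴ * B)).trace - star (ρ * A).trace * (ρ * B).trace

theorem trace_mul_conjTranspose (hρ : ρ.IsHermitian) (A : Matrix n n ℂ) :
    (ρ * Aᴴ).trace = star (ρ * A).trace := by
  rw [← Matrix.trace_conjTranspose, Matrix.conjTranspose_mul, hρ.eq, Matrix.trace_mul_comm]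

theorem variance_eq_re_covariance (A : Matrix n n ℂ) :
    variance ρ A = (covariance ρ A A).re := by
  simp only [variance, covariance, Complex.sub_re, Complex.star_def,
    ← Complex.normSq_eq_conj_mul_self, Complex.ofReal_re, Complex.normSq_eq_norm_sq]

/-- The Cauchy–Schwarz inequality for the form `(X, Y) ↦ Tr[ρ X† Y]`. -/
theorem norm_trace_mul_conjTranspose_mul_le (hρ : ρ.PosSemidef) (X Y : Matrix n n ℂ) :
    ‖(ρ * (Xᴴ * Y)).trace‖ ≤
      √(ρ * (Xᴴ * X)).trace.re * √(ρ * (Yᴴ * Y)).trace.re := by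
  let _ := ρ.toMatrixSeminormedAddCommGroup hρ
  let _ := ρ.toMatrixInnerProductSpace hρ
  have hinner (Z W : Matrix n n ℂ) : inner ℂ Z W = (ρ * (Zᴴ * W)).trace := by
    change (W * ρ * Zᴴ).trace = _
    rw [mul_assoc, Matrix.trace_mul_comm, mul_assoc]
  have h := norm_inner_le_norm (𝕜 := ℂ) X Y
  rw [@norm_eq_sqrt_re_inner ℂ _ _ _ _ X, @norm_eq_sqrt_re_inner ℂ _ _ _ _ Y] at h
  rw [hinner, hinner, hinner] at h
  exact h

variable [DecidableEq n]

theorem trace_mul_nonneg (hρ : ρ.PosSemidef) {M : Matrix n n ℂ} (hM : M.PosSemidef) :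
    0 ≤ (ρ * M).trace := by
  obtain ⟨C, rfl⟩ := CStarAlgebra.nonneg_iff_eq_star_mul_self.mp hM.nonneg
  rw [← mul_assoc, Matrix.trace_mul_comm, ← mul_assoc]
  exact (hρ.mul_mul_conjTranspose_same C).trace_nonneg

theorem re_trace_mul_conjTranspose_mul_self_nonneg (hρ : ρ.PosSemidef) (X : Matrix n n ℂ) :
    0 ≤ (ρ * (Xᴴ * X)).trace.re :=
  (Complex.nonneg_iff.mp
    (trace_mul_nonneg hρ (Matrix.posSemidef_conjTranspose_mul_self X))).1

theorem re_trace_mul_conjTranspose_mul_self_mul_le (hρ : ρ.PosSemidef) (M Y : Matrix n n ℂ) :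
    (ρ * ((M * Y)ᴴ * (M * Y))).trace.re ≤ ‖M‖ ^ 2 * (ρ * (Yᴴ * Y)).trace.re := by
  have h : (algebraMap ℝ (Matrix n n ℂ) (‖M‖ ^ 2) - Mᴴ * M).PosSemidef :=
    CStarAlgebra.star_mul_le_algebraMap_norm_sq (a := M)
  have h' := (Complex.nonneg_iff.mp (trace_mul_nonneg hρ (h.conjTranspose_mul_mul_same Y))).1
  have he : ρ * (Yᴴ * (algebraMap ℝ (Matrix n n ℂ) (‖M‖ ^ 2) - Mᴴ * M) * Y) =
      (‖M‖ ^ 2) • (ρ * (Yᴴ * Y)) - ρ * ((M * Y)ᴴ * (M * Y)) := by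
    simp only [Algebra.algebraMap_eq_smul_one, Matrix.conjTranspose_mul, mul_sub, sub_mul,
      mul_smul_comm, smul_mul_assoc, mul_one, mul_assoc]
  rw [he, Matrix.trace_sub, Matrix.trace_smul, Complex.sub_re, Complex.smul_re, smul_eq_mul] at h'
  linarith

theorem norm_trace_mul_conjTranspose_mul_mul_le (hρ : ρ.PosSemidef) (X M Y : Matrix n n ℂ) :
    ‖(ρ * (Xᴴ * (M * Y))).trace‖ ≤
      ‖M‖ * (√(ρ * (Xᴴ * X)).trace.re * √(ρ * (Yᴴ * Y)).trace.re) := by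
  calc _ ≤ √(ρ * (Xᴴ * X)).trace.re * √(ρ * ((M * Y)ᴴ * (M * Y))).trace.re :=
        norm_trace_mul_conjTranspose_mul_le hρ X (M * Y)
    _ ≤ √(ρ * (Xᴴ * X)).trace.re * (‖M‖ * √(ρ * (Yᴴ * Y)).trace.re) := by
        gcongr
        rw [← Real.sqrt_sq (norm_nonneg M), ← Real.sqrt_mul (sq_nonneg _)]
        exact Real.sqrt_le_sqrt (re_trace_mul_conjTranspose_mul_self_mul_le hρ M Y)
    _ = _ := by ring

theorem norm_trace_mul_le_norm (hρ : IsDensityMatrix ρ) (M : Matrix n n ℂ) :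
    ‖(ρ * M).trace‖ ≤ ‖M‖ := by
  simpa [hρ.2] using norm_trace_mul_conjTranspose_mul_mul_le hρ.1 1 M 1

theorem re_trace_mul_conjTranspose_mul_self_le (hρ : IsDensityMatrix ρ) (M : Matrix n n ℂ) :
    (ρ * (Mᴴ * M)).trace.re ≤ ‖M‖ ^ 2 := by
  simpa [hρ.2] using re_trace_mul_conjTranspose_mul_self_mul_le hρ.1 M 1

theorem covariance_eq_trace_sub_sub (hρ : IsDensityMatrix ρ) (A B : Matrix n n ℂ) (α : ℂ) :
    covariance ρ A B = (ρ * ((A - α • 1)ᴴ * (B - (ρ * B).trace • 1))).trace := by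
  simp only [covariance, Matrix.conjTranspose_sub, Matrix.conjTranspose_smul,
    Matrix.conjTranspose_one, sub_mul, mul_sub, smul_mul_assoc, mul_smul_comm, one_mul, mul_one,
    Matrix.trace_sub, Matrix.trace_smul, hρ.2, trace_mul_conjTranspose hρ.1.1, smul_eq_mul]
  ring

theorem re_trace_centered_le (hρ : IsDensityMatrix ρ) (B : Matrix n n ℂ) :
    (ρ * ((B - (ρ * B).trace • 1)ᴴ * (B - (ρ * B).trace • 1))).trace.re ≤ ‖B‖ ^ 2 := by
  rw [← covariance_eq_trace_sub_sub hρ, ← variance_eq_re_covariance, variance]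
  linarith [re_trace_mul_conjTranspose_mul_self_le hρ B, sq_nonneg ‖(ρ * B).trace‖]

theorem norm_covariance_le (hρ : IsDensityMatrix ρ) (A B : Matrix n n ℂ) :
    ‖covariance ρ A B‖ ≤ ‖A‖ * ‖B‖ := by
  rw [covariance_eq_trace_sub_sub hρ A B (ρ * A).trace]
  refine (norm_trace_mul_conjTranspose_mul_le hρ.1 _ _).trans ?_
  gcongr <;> exact Real.sqrt_le_iff.mpr ⟨norm_nonneg _, re_trace_centered_le hρ _⟩

/-- If `P` is a projection compressing `A` to a scalar and `A`, `P` commute with `B`, then the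
covariance of `A` and `B` is controlled by the weight of `ρ` outside the range of `P`. -/
theorem norm_covariance_le_of_compression (hρ : IsDensityMatrix ρ) {P A B : Matrix n n ℂ} {α : ℂ}
    {ε : ℝ} (hP : IsStarProjection P) (hPA : P * A * P = α • P) (hPB : Commute P B)
    (hAB : Commute Aᴴ B) (hε : (ρ * (1 - P)).trace.re = ε) :
    ‖covariance ρ A B‖ ≤ ‖A‖ * ‖B‖ * (2 * √ε) + ‖α‖ * ‖B‖ * (2 * ε) := by
  have hPh : Pᴴ = P := hP.isSelfAdjoint
  have hPP : P * P = P := hP.isIdempotentElem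
  have hP1 : ‖P‖ ≤ 1 := hP.norm_le
  obtain ⟨Q, hQ⟩ : ∃ Q, Q = 1 - P := ⟨_, rfl⟩
  obtain ⟨B', hB'⟩ : ∃ B', B' = B - (ρ * B).trace • 1 := ⟨_, rfl⟩
  have hQh : Qᴴ = Q := by rw [hQ, Matrix.conjTranspose_sub, Matrix.conjTranspose_one, hPh]
  have hQQ : Q * Q = Q := by
    rw [hQ, sub_mul, mul_sub, mul_sub, hPP]
    simp
  have hQB : Commute Q B := by rw [hQ]; exact (Commute.one_left B).sub_left hPB
  have hε0 : 0 ≤ ε := by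
    have := re_trace_mul_conjTranspose_mul_self_nonneg hρ.1 Q
    rwa [hQh, hQQ, hQ, hε] at this
  have hQε : (ρ * (Qᴴ * Q)).trace.re = ε := by rw [hQh, hQQ, hQ, hε]
  have hPA' : P * Aᴴ * P = star α • P := by
    have := congrArg Matrix.conjTranspose hPA
    simpa [hPh, mul_assoc] using this
  have hcenter : √(ρ * (B'ᴴ * B')).trace.re ≤ ‖B‖ :=
    Real.sqrt_le_iff.mpr ⟨norm_nonneg _, hB' ▸ re_trace_centered_le hρ B⟩
  have hcenter' : √(ρ * (B' * B'ᴴ)).trace.re ≤ ‖B‖ := by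
    refine Real.sqrt_le_iff.mpr ⟨norm_nonneg _, ?_⟩
    have h := re_trace_centered_le hρ Bᴴ
    rw [trace_mul_conjTranspose hρ.1.1, Matrix.l2_opNorm_conjTranspose] at h
    simpa [hB'] using h
  have hsplit : (A - α • 1)ᴴ * B' = Q * (Aᴴ * B') + B' * (P * Aᴴ * Q) - star α • (Q * B') := by
    have hcomm : B' * (P * Aᴴ * Q) = P * Aᴴ * Q * B' := by
      have h : Commute (P * Aᴴ * Q) B' := by
        rw [hB']
        exact ((hPB.mul_left hAB).mul_left hQB).sub_right
          ((Commute.one_right _).smul_right _)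
      exact h.eq.symm
    rw [hcomm, ← mul_assoc, ← smul_mul_assoc, ← add_mul, ← sub_mul]
    congr 1
    rw [hQ, mul_sub, hPA', sub_mul, smul_sub]
    simp
  have h₁ : ‖(ρ * (Q * (Aᴴ * B'))).trace‖ ≤ ‖A‖ * ‖B‖ * √ε := by
    have h := norm_trace_mul_conjTranspose_mul_mul_le hρ.1 Q Aᴴ B'
    rw [hQε, hQh, Matrix.l2_opNorm_conjTranspose] at h
    calc _ ≤ _ := h
      _ ≤ ‖A‖ * (√ε * ‖B‖) := by gcongr
      _ = _ := by ring
  have h₂ : ‖(ρ * (B' * (P * Aᴴ * Q))).trace‖ ≤ ‖A‖ * ‖B‖ * √ε := by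
    have h := norm_trace_mul_conjTranspose_mul_mul_le hρ.1 B'ᴴ (P * Aᴴ) Q
    have hn : ‖P * Aᴴ‖ ≤ ‖A‖ :=
      calc _ ≤ ‖P‖ * ‖Aᴴ‖ := norm_mul_le _ _
        _ ≤ 1 * ‖A‖ := by rw [Matrix.l2_opNorm_conjTranspose]; gcongr
        _ = ‖A‖ := one_mul _
    rw [hQε, Matrix.conjTranspose_conjTranspose] at h
    calc _ ≤ _ := h
      _ ≤ ‖A‖ * (‖B‖ * √ε) := by gcongr
      _ = _ := by ring
  have h₃ : ‖(ρ * (Q * B')).trace‖ ≤ 2 * ‖B‖ * ε := by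
    have h := norm_trace_mul_conjTranspose_mul_mul_le hρ.1 Q B Q
    rw [hQε, Real.mul_self_sqrt hε0, hQh, ← hQB.eq, ← mul_assoc Q Q, hQQ] at h
    have hρQ : ‖(ρ * Q).trace‖ ≤ ε := by
      have h := norm_trace_mul_conjTranspose_mul_le hρ.1 Q Q
      rwa [hQε, Real.mul_self_sqrt hε0, hQh, hQQ] at h
    calc _ = ‖(ρ * (Q * B)).trace - (ρ * B).trace * (ρ * Q).trace‖ := by
          simp [hB', mul_sub]
      _ ≤ ‖(ρ * (Q * B)).trace‖ + ‖(ρ * B).trace * (ρ * Q).trace‖ := norm_sub_le _ _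
      _ ≤ ‖B‖ * ε + ‖B‖ * ε := by
          rw [norm_mul]
          gcongr
          exact norm_trace_mul_le_norm hρ B
      _ = _ := by ring
  rw [covariance_eq_trace_sub_sub hρ A B α, ← hB', hsplit, mul_sub, mul_add, Matrix.trace_sub,
    Matrix.trace_add, mul_smul_comm, Matrix.trace_smul, smul_eq_mul]
  calc _ ≤ ‖(ρ * (Q * (Aᴴ * B'))).trace‖ + ‖(ρ * (B' * (P * Aᴴ * Q))).trace‖ +
        ‖star α * (ρ * (Q * B')).trace‖ :=
        (norm_sub_le _ _).trans (by gcongr; exact norm_add_le _ _)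
    _ ≤ ‖A‖ * ‖B‖ * √ε + ‖A‖ * ‖B‖ * √ε + ‖α‖ * (2 * ‖B‖ * ε) := by
        rw [norm_mul, norm_star]
        gcongr
    _ = _ := by ring

theorem opNorm_eq_norm (A : Matrix n n ℂ) : opNorm A = ‖A‖ := rfl

end StateInequalities

section EntropyBounds

theorem mul_one_sub_le_neg_mul_log {x : ℝ} (hx : 0 ≤ x) : x * (1 - x) ≤ -(x * Real.log x) := by
  rcases hx.eq_or_lt with rfl | hx
  · simp
  · nlinarith [Real.log_le_sub_one_of_pos hx]

/-- A probability vector of small Shannon entropy is concentrated at its largest entry. -/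
theorem sqrt_bound_le_sqrt_entropy {ι : Type*} [Fintype ι] {p : ι → ℝ}
    (hp : ∀ i, 0 ≤ p i) (hsum : ∑ i, p i = 1) {i₀ : ι} (hmax : ∀ i, p i ≤ p i₀)
    (hs : -∑ i, p i * Real.log (p i) < 1 / 4) :
    2 * √(1 - p i₀) + 2 * (1 - p i₀) ≤ 2 * √(-∑ i, p i * Real.log (p i)) := by
  classical
  obtain ⟨s, hsdef⟩ : ∃ s, s = -∑ i, p i * Real.log (p i) := ⟨_, rfl⟩
  obtain ⟨ε, hε⟩ : ∃ ε, ε = 1 - p i₀ := ⟨_, rfl⟩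
  rw [← hsdef] at hs ⊢
  rw [← hε]
  have hsum' : p i₀ + ∑ i ∈ Finset.univ.erase i₀, p i = 1 := by
    rw [Finset.add_sum_erase _ _ (Finset.mem_univ i₀), hsum]
  have hε0 : 0 ≤ ε := by
    have : 0 ≤ ∑ i ∈ Finset.univ.erase i₀, p i := Finset.sum_nonneg fun i _ => hp i
    linarith
  have hεs : ε ≤ s := by
    calc ε = ∑ i, p i * ε := by rw [← Finset.sum_mul, hsum, one_mul]
      _ ≤ ∑ i, -(p i * Real.log (p i)) := Finset.sum_le_sum fun i _ =>
          (mul_le_mul_of_nonneg_left (by linarith [hmax i]) (hp i)).trans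
            (mul_one_sub_le_neg_mul_log (hp i))
      _ = s := by rw [hsdef, Finset.sum_neg_distrib]
  have hlog {x : ℝ} (hx : 0 ≤ x) (hx' : x ≤ ε) : x * (69 / 50) ≤ -(x * Real.log x) := by
    rcases hx.eq_or_lt with rfl | hx
    · simp
    · have h₁ : Real.log x ≤ Real.log (1 / 4) := Real.log_le_log hx (by linarith)
      have h₂ : Real.log (1 / 4) = -(2 * Real.log 2) := by
        rw [one_div, Real.log_inv, show (4 : ℝ) = 2 ^ 2 by norm_num, Real.log_pow]
        norm_num
      nlinarith [Real.log_two_gt_d9]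
  have hs' : ε * (119 / 50 - ε) ≤ s := by
    calc ε * (119 / 50 - ε) =
        p i₀ * (1 - p i₀) + (∑ i ∈ Finset.univ.erase i₀, p i) * (69 / 50) := by
          rw [show ∑ i ∈ Finset.univ.erase i₀, p i = ε by linarith, show p i₀ = 1 - ε by linarith]
          ring
      _ ≤ -(p i₀ * Real.log (p i₀)) + ∑ i ∈ Finset.univ.erase i₀, -(p i * Real.log (p i)) := by
          rw [Finset.sum_mul]
          refine add_le_add (mul_one_sub_le_neg_mul_log (hp i₀)) (Finset.sum_le_sum fun i hi => ?_)
          refine hlog (hp i) ?_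
          have := Finset.single_le_sum (f := p) (fun j _ => hp j) hi
          linarith
      _ = s := by
          rw [Finset.add_sum_erase _ (fun i => -(p i * Real.log (p i))) (Finset.mem_univ i₀), hsdef,
            Finset.sum_neg_distrib]
  have hε' : ε ≤ 3 / 25 := by nlinarith
  have hr : √ε ≤ 7 / 20 := Real.sqrt_le_iff.mpr ⟨by norm_num, by norm_num; linarith⟩
  have hrε := Real.sq_sqrt hε0
  have h : √ε + ε ≤ √s := by
    refine Real.le_sqrt_of_sq_le ?_
    nlinarith [Real.sqrt_nonneg ε, mul_nonneg hε0 (Real.sqrt_nonneg ε)]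
  linarith

end EntropyBounds

section LocalOperators

open scoped Matrix.Norms.L2Operator MatrixOrder

theorem sum_ite_agree_off (k : Fin N) (x : ∀ j, d j) (f : (∀ j, d j) → ℂ) :
    (∑ y, if ∀ j, j ≠ k → x j = y j then f y else 0) = ∑ a, f (Function.update x k a) := by
  rw [← Finset.sum_filter]
  symm
  refine Finset.sum_bij (fun a _ => Function.update x k a) ?_ ?_ ?_ (fun _ _ => rfl)
  · intro a _
    simp +contextual
  · intro a _ b _ h
    simpa using congrFun h k
  · intro y hy
    refine ⟨y k, Finset.mem_univ _, ?_⟩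
    ext j
    rcases eq_or_ne j k with rfl | hj
    · simp
    · simpa [hj] using (Finset.mem_filter.mp hy).2 j hj

theorem extendAt_mul_apply (k : Fin N) (A : Matrix (d k) (d k) ℂ)
    (M : Matrix (∀ j, d j) (∀ j, d j) ℂ) (x z : ∀ j, d j) :
    (extendAt k A * M) x z = ∑ a, A (x k) a * M (Function.update x k a) z := by
  simp only [Matrix.mul_apply, extendAt, Matrix.of_apply, ite_mul, zero_mul]
  rw [sum_ite_agree_off k x fun y => A (x k) (y k) * M y z]
  simp

theorem extendAt_mul (k : Fin N) (A B : Matrix (d k) (d k) ℂ) :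
    extendAt k (A * B) = extendAt k A * extendAt k B := by
  ext x z
  rw [extendAt_mul_apply]
  have h (a : d k) : (∀ j, j ≠ k → Function.update x k a j = z j) ↔ ∀ j, j ≠ k → x j = z j :=
    forall₂_congr fun j hj => by rw [Function.update_of_ne hj]
  simp only [extendAt, Matrix.of_apply, h, Function.update_self, Matrix.mul_apply]
  split_ifs <;> simp

theorem extendAt_mul_extendAt_apply {k l : Fin N} (hkl : k ≠ l) (A : Matrix (d k) (d k) ℂ)
    (B : Matrix (d l) (d l) ℂ) (x z : ∀ j, d j) :
    (extendAt k A * extendAt l B) x z =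
      if ∀ j, j ≠ k → j ≠ l → x j = z j then A (x k) (z k) * B (x l) (z l) else 0 := by
  rw [extendAt_mul_apply]
  have h (a : d k) : (∀ j, j ≠ l → Function.update x k a j = z j) ↔
      a = z k ∧ ∀ j, j ≠ k → j ≠ l → x j = z j := by
    constructor
    · intro h
      refine ⟨by simpa using h k hkl, fun j hk hl => ?_⟩
      simpa [hk] using h j hl
    · rintro ⟨rfl, h⟩ j hl
      rcases eq_or_ne j k with rfl | hk
      · simp
      · simpa [hk] using h j hk hl
  simp only [extendAt, Matrix.of_apply, h, Function.update_of_ne hkl.symm]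
  by_cases hz : ∀ j, j ≠ k → j ≠ l → x j = z j
  · simp only [and_iff_left hz, if_pos hz]
    simp
  · simp only [hz, and_false, if_false, mul_zero, Finset.sum_const_zero]

theorem commute_extendAt {k l : Fin N} (hkl : k ≠ l) (A : Matrix (d k) (d k) ℂ)
    (B : Matrix (d l) (d l) ℂ) : Commute (extendAt k A) (extendAt l B) := by
  ext x z
  rw [extendAt_mul_extendAt_apply hkl, extendAt_mul_extendAt_apply hkl.symm]
  have h : (∀ j, j ≠ k → j ≠ l → x j = z j) ↔ ∀ j, j ≠ l → j ≠ k → x j = z j :=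
    forall_congr' fun _ => ⟨fun h hl hk => h hk hl, fun h hk hl => h hl hk⟩
  simp only [h, mul_comm]

/-- Extension of local operators as a star algebra homomorphism. -/
def extendHom (k : Fin N) :
    Matrix (d k) (d k) ℂ →⋆ₐ[ℂ] Matrix (∀ j, d j) (∀ j, d j) ℂ where
  toFun := extendAt k
  map_one' := by
    ext x y
    simp only [extendAt, Matrix.of_apply, Matrix.one_apply, funext_iff, ← ite_and]
    congr 1
    refine propext ⟨fun h j => ?_, fun h => ⟨fun j _ => h j, h k⟩⟩
    rcases eq_or_ne j k with rfl | hj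
    exacts [h.2, h.1 j hj]
  map_mul' := extendAt_mul k
  map_zero' := by
    ext x y
    simp [extendAt]
  map_add' A B := by
    ext x y
    simp only [extendAt, Matrix.of_apply, Matrix.add_apply]
    split_ifs <;> simp
  commutes' c := by
    ext x y
    simp only [extendAt, Matrix.of_apply, Matrix.algebraMap_matrix_apply, funext_iff, ← ite_and]
    congr 1
    refine propext ⟨fun h j => ?_, fun h => ⟨fun j _ => h j, h k⟩⟩
    rcases eq_or_ne j k with rfl | hj
    exacts [h.2, h.1 j hj]
  map_star' A := by
    ext x y
    simp only [extendAt, Matrix.of_apply, Matrix.star_apply, eq_comm (a := y _), apply_ite star,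
      star_zero]

theorem extendHom_apply (k : Fin N) (A : Matrix (d k) (d k) ℂ) :
    extendHom k A = extendAt k A := rfl

theorem trace_mul_extendAt (k : Fin N) (ρ : Matrix (∀ j, d j) (∀ j, d j) ℂ)
    (A : Matrix (d k) (d k) ℂ) :
    (ρ * extendAt k A).trace = (reduce k ρ * A).trace := by
  have h (x : ∀ j, d j) : (ρ * extendAt k A) x x =
      ∑ b, ρ x (Function.update x k b) * A b (x k) := by
    simp only [Matrix.mul_apply, extendAt, Matrix.of_apply, mul_ite, mul_zero]
    simp_rw [eq_comm (b := x _)]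
    rw [sum_ite_agree_off k x fun y => ρ x y * A (y k) (x k)]
    simp
  simp only [Matrix.trace, Matrix.diag_apply, h, reduce, Matrix.mul_apply, Matrix.of_apply,
    Finset.sum_mul, ite_mul, zero_mul]
  symm
  calc _ = ∑ a, ∑ x : ∀ j, d j, ∑ b,
        if x k = a then ρ x (Function.update x k b) * A b a else 0 :=
        Finset.sum_congr rfl fun _ _ => Finset.sum_comm
    _ = ∑ x : ∀ j, d j, ∑ b, ∑ a,
        if x k = a then ρ x (Function.update x k b) * A b a else 0 := by
        rw [Finset.sum_comm]
        exact Finset.sum_congr rfl fun _ _ => Finset.sum_comm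
    _ = _ := by simp

theorem isDensityMatrix_reduce (k : Fin N) {ρ : Matrix (∀ j, d j) (∀ j, d j) ℂ}
    (hρ : IsDensityMatrix ρ) : IsDensityMatrix (reduce k ρ) := by
  refine ⟨Matrix.posSemidef_iff_dotProduct_mulVec.mpr ⟨?_, fun v => ?_⟩, ?_⟩
  · ext a b
    have h (a b : d k) : reduce k ρ a b = (ρ * extendAt k (Matrix.single b a 1)).trace := by
      rw [trace_mul_extendAt, Matrix.trace_mul_single]
      simp
    rw [Matrix.conjTranspose_apply, h, h, ← trace_mul_conjTranspose hρ.1.1, ← extendHom_apply,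
      ← Matrix.star_eq_conjTranspose, ← map_star, Matrix.star_eq_conjTranspose,
      Matrix.conjTranspose_single, star_one, extendHom_apply]
  · have h : star v ⬝ᵥ (reduce k ρ *ᵥ v) =
        (ρ * extendAt k (Matrix.vecMulVec v (star v))).trace := by
      rw [trace_mul_extendAt, Matrix.mul_vecMulVec, Matrix.trace_vecMulVec, dotProduct_comm]
    rw [h]
    refine trace_mul_nonneg hρ.1 ?_
    rw [← extendHom_apply]
    have hv := Matrix.posSemidef_vecMulVec_self_star v
    obtain ⟨C, hC⟩ := CStarAlgebra.nonneg_iff_eq_star_mul_self.mp hv.nonneg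
    rw [hC, map_mul, map_star]
    exact Matrix.posSemidef_conjTranspose_mul_self _
  · have h := trace_mul_extendAt k ρ 1
    rw [← extendHom_apply, map_one, mul_one, mul_one, hρ.2] at h
    exact h.symm

theorem norm_extendAt_le (k : Fin N) (A : Matrix (d k) (d k) ℂ) : ‖extendAt k A‖ ≤ ‖A‖ :=
  NonUnitalStarAlgHom.norm_apply_le (extendHom k) A

theorem isDensityMatrix_vecMulVec_star {n : Type*} [Fintype n] {v : n → ℂ}
    (hv : star v ⬝ᵥ v = 1) : IsDensityMatrix (Matrix.vecMulVec v (star v)) :=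
  ⟨Matrix.posSemidef_vecMulVec_self_star v, by rw [Matrix.trace_vecMulVec, dotProduct_comm, hv]⟩

/-- The covariance of two operators on different factors is controlled by the weight that the
reduced state on the first factor has outside a given unit vector. -/
theorem norm_covariance_extendAt_le_of_unit {ρ : Matrix (∀ j, d j) (∀ j, d j) ℂ}
    (hρ : IsDensityMatrix ρ) {k l : Fin N} (hkl : k ≠ l) (A : Matrix (d k) (d k) ℂ)
    (B : Matrix (d l) (d l) ℂ) {v : d k → ℂ} (hv : star v ⬝ᵥ v = 1) {p : ℝ}
    (hp : (star v ⬝ᵥ (reduce k ρ *ᵥ v)).re = p) (hp1 : p ≤ 1) :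
    ‖covariance ρ (extendAt k A) (extendAt l B)‖ ≤
      ‖A‖ * ‖B‖ * (2 * √(1 - p) + 2 * (1 - p)) := by
  have hV := isDensityMatrix_vecMulVec_star hv
  obtain ⟨V, hVdef⟩ : ∃ V, V = Matrix.vecMulVec v (star v) := ⟨_, rfl⟩
  rw [← hVdef] at hV
  have hVV : IsStarProjection V :=
    ⟨by rw [IsIdempotentElem, hVdef, Matrix.vecMulVec_mul_vecMulVec, hv, one_smul], hV.1.1⟩
  have hVA : V * A * V = (V * A).trace • V := by
    rw [hVdef, Matrix.vecMulVec_mul, Matrix.vecMulVec_mul_vecMulVec, Matrix.trace_vecMulVec,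
      dotProduct_comm v, Matrix.vecMulVec_smul]
  have hα : ‖(V * A).trace‖ ≤ ‖A‖ := norm_trace_mul_le_norm hV A
  have hε : (ρ * (1 - extendAt k V)).trace.re = 1 - p := by
    rw [mul_sub, mul_one, Matrix.trace_sub, hρ.2, trace_mul_extendAt, hVdef, Matrix.mul_vecMulVec,
      Matrix.trace_vecMulVec, dotProduct_comm, Complex.sub_re, hp, Complex.one_re]
  have h := norm_covariance_le_of_compression hρ (P := extendAt k V) (A := extendAt k A)
    (B := extendAt l B) (α := (V * A).trace) (hVV.map (extendHom k))
    (by rw [← extendAt_mul, ← extendAt_mul, hVA]; exact map_smul (extendHom k) _ _)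
    (commute_extendAt hkl V B)
    (by
      have := commute_extendAt hkl Aᴴ B
      rwa [← extendHom_apply, ← Matrix.star_eq_conjTranspose, map_star] at this) hε
  calc _ ≤ _ := h
    _ ≤ ‖A‖ * ‖B‖ * (2 * √(1 - p)) + ‖A‖ * ‖B‖ * (2 * (1 - p)) := by
        have : 0 ≤ 2 * (1 - p) := by linarith
        gcongr
        exacts [norm_extendAt_le k A, norm_extendAt_le l B, norm_extendAt_le l B]
    _ = _ := by ring

theorem sum_eigenvalues {n : Type*} [Fintype n] [DecidableEq n] {σ : Matrix n n ℂ}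
    (hσ : IsDensityMatrix σ) : ∑ i, hσ.1.1.eigenvalues i = 1 := by
  have h := hσ.1.1.trace_eq_sum_eigenvalues.symm.trans hσ.2
  exact Complex.ofReal_injective (by simpa using h)

theorem eigenvalues_le_one {n : Type*} [Fintype n] [DecidableEq n] {σ : Matrix n n ℂ}
    (hσ : IsDensityMatrix σ) (i : n) : hσ.1.1.eigenvalues i ≤ 1 := by
  rw [← sum_eigenvalues hσ]
  exact Finset.single_le_sum (fun j _ => hσ.1.eigenvalues_nonneg j) (Finset.mem_univ i)

theorem entropy_nonneg {n : Type*} [Fintype n] [DecidableEq n] {σ : Matrix n n ℂ}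
    (hσ : IsDensityMatrix σ) : 0 ≤ entropy σ := by
  rw [entropy, dif_pos hσ.1.1, neg_nonneg]
  exact Finset.sum_nonpos fun i _ =>
    Real.mul_log_nonpos (hσ.1.eigenvalues_nonneg i) (eigenvalues_le_one hσ i)

theorem norm_covariance_extendAt_le [∀ k, Nonempty (d k)]
    {ρ : Matrix (∀ j, d j) (∀ j, d j) ℂ}
    (hρ : IsDensityMatrix ρ) {k l : Fin N} (hkl : k ≠ l) (A : Matrix (d k) (d k) ℂ)
    (B : Matrix (d l) (d l) ℂ) :
    ‖covariance ρ (extendAt k A) (extendAt l B)‖ ≤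
      2 * (‖A‖ * ‖B‖ * √(entropy (reduce k ρ))) := by
  have hσ := isDensityMatrix_reduce k hρ
  have hent : entropy (reduce k ρ) =
      -∑ i, hσ.1.1.eigenvalues i * Real.log (hσ.1.1.eigenvalues i) := by
    rw [entropy, dif_pos hσ.1.1]
  rcases le_or_gt (1 / 4) (entropy (reduce k ρ)) with hs | hs
  · have hr : 1 / 2 ≤ √(entropy (reduce k ρ)) := Real.le_sqrt_of_sq_le (by linarith)
    calc _ ≤ ‖extendAt k A‖ * ‖extendAt l B‖ := norm_covariance_le hρ _ _
      _ ≤ ‖A‖ * ‖B‖ := by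
          gcongr
          exacts [norm_extendAt_le k A, norm_extendAt_le l B]
      _ ≤ _ := by nlinarith [mul_nonneg (norm_nonneg A) (norm_nonneg B)]
  · obtain ⟨i, hi⟩ := Finite.exists_max hσ.1.1.eigenvalues
    have hv : star (hσ.1.1.eigenvectorBasis i).ofLp ⬝ᵥ (hσ.1.1.eigenvectorBasis i).ofLp = 1 := by
      have h := inner_self_eq_norm_sq_to_K (𝕜 := ℂ) (hσ.1.1.eigenvectorBasis i)
      rw [(hσ.1.1.eigenvectorBasis).orthonormal.1 i] at h
      rw [EuclideanSpace.inner_eq_star_dotProduct, dotProduct_comm] at h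
      simpa using h
    have h := norm_covariance_extendAt_le_of_unit hρ hkl A B hv
      (hσ.1.1.eigenvalues_eq i).symm (eigenvalues_le_one hσ i)
    have hb := sqrt_bound_le_sqrt_entropy hσ.1.eigenvalues_nonneg (sum_eigenvalues hσ) hi (hent ▸ hs)
    rw [← hent] at hb
    calc _ ≤ _ := h
      _ ≤ ‖A‖ * ‖B‖ * (2 * √(entropy (reduce k ρ))) := by gcongr
      _ = _ := by ring

theorem re_covariance_extendAt_le [∀ k, Nonempty (d k)] {ρ : Matrix (∀ j, d j) (∀ j, d j) ℂ}
    (hρ : IsDensityMatrix ρ) (G : ∀ k, Matrix (d k) (d k) ℂ) (k l : Fin N) :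
    (covariance ρ (extendAt k (G k)) (extendAt l (G l))).re ≤
      (if k = l then opNorm (G k) ^ 2 else 0) +
        2 * (opNorm (G k) * opNorm (G l) * √(entropy (reduce k ρ))) := by
  simp only [opNorm_eq_norm]
  rcases eq_or_ne k l with rfl | hkl
  · rw [if_pos rfl]
    have h := (Complex.re_le_norm _).trans
      ((norm_covariance_le hρ (extendAt k (G k)) (extendAt k (G k))).trans
        (mul_self_le_mul_self (norm_nonneg _) (norm_extendAt_le k (G k))))
    rw [← sq] at h
    exact h.trans (le_add_of_nonneg_right (by positivity))
  · rw [if_neg hkl, zero_add]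
    exact (Complex.re_le_norm _).trans (norm_covariance_extendAt_le hρ hkl (G k) (G l))

theorem covariance_sum_sum {ι n : Type*} [Fintype n] (t : Finset ι) (ρ : Matrix n n ℂ)
    (A B : ι → Matrix n n ℂ) :
    covariance ρ (∑ i ∈ t, A i) (∑ i ∈ t, B i) = ∑ i ∈ t, ∑ j ∈ t, covariance ρ (A i) (B j) := by
  simp only [covariance, Matrix.conjTranspose_sum, Finset.mul_sum, Finset.sum_mul,
    Matrix.trace_sum, star_sum, Finset.sum_sub_distrib]
  rw [Finset.sum_comm]
  congr 1
  rw [Finset.sum_comm]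

theorem sum_sum_mul_sqrt_le {ι : Type*} [Fintype ι] {a s : ι → ℝ} (ha : ∀ i, 0 ≤ a i)
    (hs : ∀ i, 0 ≤ s i) :
    ∑ i, ∑ j, a i * a j * √(s i) ≤
      (∑ i, a i ^ 2) * (Fintype.card ι * √((1 / (Fintype.card ι : ℝ)) * ∑ i, s i)) := by
  have h₁ : ∑ i, a i * √(s i) ≤ √(∑ i, a i ^ 2) * √(∑ i, s i) := by
    simpa only [Real.sq_sqrt (hs _)] using
      Real.sum_mul_le_sqrt_mul_sqrt Finset.univ a fun i => √(s i)
  have h₂ : ∑ i, a i ≤ √(∑ i, a i ^ 2) * √(Fintype.card ι) := by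
    simpa using Real.sum_mul_le_sqrt_mul_sqrt Finset.univ a fun _ => 1
  have h₃ : (Fintype.card ι : ℝ) * √((1 / (Fintype.card ι : ℝ)) * ∑ i, s i) =
      √(∑ i, s i) * √(Fintype.card ι) := by
    rw [Real.sqrt_mul (by positivity), one_div, Real.sqrt_inv, ← mul_assoc, ← div_eq_mul_inv,
      Real.div_sqrt, mul_comm]
  calc ∑ i, ∑ j, a i * a j * √(s i) = (∑ i, a i * √(s i)) * ∑ j, a j := by
        rw [Finset.sum_mul_sum]
        exact Finset.sum_congr rfl fun i _ => Finset.sum_congr rfl fun j _ => by ring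
    _ ≤ (√(∑ i, a i ^ 2) * √(∑ i, s i)) * (√(∑ i, a i ^ 2) * √(Fintype.card ι)) := by
        have := Finset.sum_nonneg fun i (_ : i ∈ Finset.univ) => ha i
        gcongr
    _ = _ := by
        rw [h₃, mul_mul_mul_comm, Real.mul_self_sqrt (Finset.sum_nonneg fun i _ => sq_nonneg _)]

end LocalOperators

/-- Lemma 1a of the paper. For arbitrary (not necessarily Hermitian)
operators `G_k` on `H_k` and `G = Σ_k (extension of G_k to H)`, and any density matrix `ρ`
on `H`, the variance of `G` is bounded by
`Var_ρ(G) ≤ ((1/N)·Σ_k ‖G_k‖_∞²) · (N + 2N²·√((1/N)·Σ_k s_k))`,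
where `s_k` is the von Neumann entropy of the reduced density matrix `ρ_k`. -/
theorem variance_le_avg_opNorm_sq_mul_entropy_factor
    [∀ k, Nonempty (d k)] (hN : 1 ≤ N)
    (G : ∀ k, Matrix (d k) (d k) ℂ)
    (ρ : Matrix (∀ j, d j) (∀ j, d j) ℂ) (hρ : IsDensityMatrix ρ) :
    variance ρ (∑ k, extendAt k (G k)) ≤
      ((1 / (N : ℝ)) * ∑ k, opNorm (G k) ^ 2) *
        ((N : ℝ) + 2 * (N : ℝ) ^ 2 *
          Real.sqrt ((1 / (N : ℝ)) * ∑ k, entropy (reduce k ρ))) := by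
  have hN0 : (N : ℝ) ≠ 0 := by positivity
  have hsum := sum_sum_mul_sqrt_le (a := fun k => opNorm (G k))
    (s := fun k => entropy (reduce k ρ)) (fun k => norm_nonneg _)
    fun k => entropy_nonneg (isDensityMatrix_reduce k hρ)
  rw [Fintype.card_fin] at hsum
  calc variance ρ (∑ k, extendAt k (G k))
      = ∑ k, ∑ l, (covariance ρ (extendAt k (G k)) (extendAt l (G l))).re := by
        simp only [variance_eq_re_covariance, covariance_sum_sum, Complex.re_sum]
    _ ≤ ∑ k, ∑ l, ((if k = l then opNorm (G k) ^ 2 else 0) +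
        2 * (opNorm (G k) * opNorm (G l) * √(entropy (reduce k ρ)))) :=
        Finset.sum_le_sum fun k _ => Finset.sum_le_sum fun l _ => re_covariance_extendAt_le hρ G k l
    _ = ∑ k, opNorm (G k) ^ 2 +
        2 * ∑ k, ∑ l, opNorm (G k) * opNorm (G l) * √(entropy (reduce k ρ)) := by
        simp [Finset.sum_add_distrib, Finset.mul_sum]
    _ ≤ ∑ k, opNorm (G k) ^ 2 + 2 * ((∑ k, opNorm (G k) ^ 2) *
        (N * √((1 / (N : ℝ)) * ∑ k, entropy (reduce k ρ)))) := by gcongr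
    _ = _ := by
        field_simp

end Paper
end
end

section
/- Let S be a unitary operator on H_p ⊗ H_t, let |i⟩ ∈ H_p and |t⟩ ∈ H_t be unit vectors, and let {|g⟩}_{g∈B} be an orthonormal basis of H_p containing |i⟩. Define the Kraus operators S_g = (⟨g| ⊗ I_t) S (|i⟩ ⊗ I_t) on H_t, the final states ρ_f = |t⟩⟨t| and ρ_f' = Σ_{g∈B} S_g |t⟩⟨t| S_g†, the orthogonal scattering probabilities p_⊥ = 1 − ⟨t|ρ_f'|t⟩ and p_⊥^{i→i} = ⟨t| S_i† (I_t − |t⟩⟨t|) S_i |t⟩, and the scattering probability p_s = 1 − ‖S_i|t⟩‖². Then the trace distance between the two final states satisfies (1/2)·‖ρ_f' − ρ_f‖₁ ≤ √(p_⊥^{i→i}) + √(p_⊥ · p_s). -/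
open scoped BigOperators Kronecker Matrix ComplexOrder

noncomputable section
namespace Paper

variable {N : ℕ} {d : Fin N → Type*} [∀ k, Fintype (d k)] [∀ k, DecidableEq (d k)]

/-- The operator `(⟨f| ⊗ I_t) S (|i⟩ ⊗ I_t)` on the target space `H_t`, obtained by
sandwiching `S` between the indicated particle states. -/
noncomputable def sandwichOp {p t : Type*} [Fintype p] [Fintype t]
    (S : Matrix (p × t) (p × t) ℂ) (f i : p → ℂ) : Matrix t t ℂ :=
  Matrix.of fun a b => ∑ x, ∑ y, (starRingEnd ℂ) (f x) * S (x, a) (y, b) * i y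

open scoped InnerProductSpace

/-- The scalar estimate behind `sum_norm_sq_inner_sub_le`. -/
theorem sq_mul_sq_add_le_mul {A W C k h n : ℝ} (hW : 0 ≤ W) (hC : 0 ≤ C)
    (hk : 0 ≤ k) (hh : 0 ≤ h) (hn : 0 ≤ n) (hn2 : n ^ 2 = A ^ 2 + W ^ 2)
    (hkh : k ^ 2 ≤ C ^ 2 * h) (hkC : k ^ 2 ≤ C ^ 2 * (1 - C ^ 2) * W ^ 2) :
    W ^ 2 * C ^ 2 + 2 * A * k - h ≤ W * n := by
  have hWn := mul_nonneg hW hn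
  rcases hW.eq_or_lt with rfl | hW
  · have : k = 0 := by nlinarith
    subst this
    simpa using hh
  rcases hC.eq_or_lt with rfl | hC
  · have : k = 0 := by nlinarith
    subst this
    nlinarith
  obtain ⟨r, rfl⟩ : ∃ r, k = C * W * r := ⟨k / (C * W), by field_simp⟩
  have hC2 : 0 < C ^ 2 := by positivity
  have hrh : W ^ 2 * r ^ 2 ≤ h := le_of_mul_le_mul_left (by linarith) hC2
  have hrC : r ^ 2 ≤ 1 - C ^ 2 :=
    le_of_mul_le_mul_left (by linarith) (mul_pos hC2 (pow_pos hW 2))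
  have hkey : W * (C ^ 2 - r ^ 2) + 2 * A * C * r ≤ n := by
    refine le_of_sq_le_sq ?_ hn
    have h1 : (W * (C ^ 2 - r ^ 2) + 2 * A * C * r) ^ 2 ≤ n ^ 2 * (C ^ 2 + r ^ 2) ^ 2 := by
      rw [hn2]
      nlinarith [sq_nonneg (A * (C ^ 2 - r ^ 2) - W * (2 * C * r))]
    have h2 : (C ^ 2 + r ^ 2) ^ 2 ≤ 1 := by
      apply pow_le_one₀ <;> nlinarith
    nlinarith [sq_nonneg n]
  nlinarith


section InnerProduct

variable {E ι : Type*} [NormedAddCommGroup E] [InnerProductSpace ℂ E]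

theorem norm_sq_sub_inner_smul {t : E} (ht : ‖t‖ = 1) (v : E) :
    ‖v - ⟪t, v⟫_ℂ • t‖ ^ 2 = ‖v‖ ^ 2 - ‖⟪t, v⟫_ℂ‖ ^ 2 := by
  rw [@norm_sub_sq ℂ, inner_smul_right, norm_smul, ht, mul_one, ← inner_conj_symm v t,
    RCLike.mul_conj]
  norm_cast
  ring

/-- For a unit vector `t` and the orthogonal projection `P` onto the span of finitely many
orthonormal vectors, `‖v‖² ‖P t‖² - ‖P v‖² ≤ ‖v‖ ‖v - ⟨t, v⟩ t‖`. -/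
theorem sum_norm_sq_inner_sub_le {e : ι → E} (he : Orthonormal ℂ e) (s : Finset ι)
    {t : E} (ht : ‖t‖ = 1) (v : E) :
    ∑ i ∈ s, (‖v‖ ^ 2 * ‖⟪e i, t⟫_ℂ‖ ^ 2 - ‖⟪e i, v⟫_ℂ‖ ^ 2) ≤
      ‖v‖ * ‖v - ⟪t, v⟫_ℂ • t‖ := by
  set a := ⟪t, v⟫_ℂ with ha
  set w := v - a • t with hw
  have hvw : v = a • t + w := by simp [hw]
  have hwn : ‖v‖ ^ 2 = ‖a‖ ^ 2 + ‖w‖ ^ 2 := by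
    rw [hw, ha, norm_sq_sub_inner_smul ht]; ring
  have htw : ⟪t, w⟫_ℂ = 0 := by
    rw [hw, inner_sub_right, inner_smul_right, inner_self_eq_norm_sq_to_K, ht, ← ha]; simp
  set y := ∑ i ∈ s, ⟪e i, t⟫_ℂ • e i with hy
  set D := ∑ i ∈ s, ‖⟪e i, t⟫_ℂ‖ ^ 2 with hD
  have hD0 : 0 ≤ D := Finset.sum_nonneg fun _ _ => by positivity
  set h := ∑ i ∈ s, ‖⟪e i, w⟫_ℂ‖ ^ 2 with hh
  have hκ : ⟪y, w⟫_ℂ = ∑ i ∈ s, starRingEnd ℂ ⟪e i, t⟫_ℂ * ⟪e i, w⟫_ℂ := by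
    simp only [hy, sum_inner, inner_smul_left]
  have hyt : ⟪y, t⟫_ℂ = (D : ℂ) := by
    simp only [hy, sum_inner, inner_smul_left, hD, Complex.conj_mul', Complex.ofReal_sum,
      Complex.ofReal_pow]
  have hyy : ‖y‖ ^ 2 = D := by
    have : ⟪y, y⟫_ℂ = (D : ℂ) := by
      rw [hy, he.inner_sum]
      simp only [hD, Complex.conj_mul', Complex.ofReal_sum, Complex.ofReal_pow]
    rw [inner_self_eq_norm_sq_to_K] at this
    exact Complex.ofReal_injective (by simpa using this)
  have hkh : ‖⟪y, w⟫_ℂ‖ ^ 2 ≤ D * h := by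
    rw [hκ]
    refine (pow_le_pow_left₀ (norm_nonneg _) (norm_sum_le _ _) 2).trans ?_
    simp only [norm_mul, RCLike.norm_conj]
    exact Finset.sum_mul_sq_le_sq_mul_sq _ _ _
  have hkC : ‖⟪y, w⟫_ℂ‖ ^ 2 ≤ D * (1 - D) * ‖w‖ ^ 2 := by
    have h1 : ⟪y, w⟫_ℂ = ⟪y - (D : ℂ) • t, w⟫_ℂ := by
      rw [inner_sub_left, inner_smul_left, htw]; simp
    have h2 : ‖y - (D : ℂ) • t‖ ^ 2 = D * (1 - D) := by
      have hty : ⟪t, y⟫_ℂ = (D : ℂ) := by rw [← inner_conj_symm, hyt]; simp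
      rw [← hty, norm_sq_sub_inner_smul ht, hty, hyy]
      simp
      ring
    rw [h1, ← h2, ← mul_pow]
    exact pow_le_pow_left₀ (norm_nonneg _) (norm_inner_le_norm _ _) 2
  have hsplit : ∑ i ∈ s, ‖⟪e i, v⟫_ℂ‖ ^ 2 =
      ‖a‖ ^ 2 * D + 2 * (starRingEnd ℂ a * ⟪y, w⟫_ℂ).re + h := by
    rw [hκ, hD, hh, Finset.mul_sum, Finset.mul_sum, Complex.re_sum, Finset.mul_sum,
      ← Finset.sum_add_distrib, ← Finset.sum_add_distrib]
    refine Finset.sum_congr rfl fun i _ => ?_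
    rw [hvw, inner_add_right, inner_smul_right]
    simp only [← Complex.normSq_eq_norm_sq, Complex.normSq_add, Complex.normSq_mul]
    simp only [Complex.mul_re, Complex.mul_im, Complex.conj_re, Complex.conj_im]
    ring
  have hre : -(‖a‖ * ‖⟪y, w⟫_ℂ‖) ≤ (starRingEnd ℂ a * ⟪y, w⟫_ℂ).re := by
    have := Complex.abs_re_le_norm (starRingEnd ℂ a * ⟪y, w⟫_ℂ)
    rw [norm_mul, RCLike.norm_conj] at this
    exact (abs_le.1 this).1
  have hmain := sq_mul_sq_add_le_mul (A := ‖a‖) (W := ‖w‖) (C := √D) (k := ‖⟪y, w⟫_ℂ‖)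
    (h := h) (n := ‖v‖) (norm_nonneg _) (Real.sqrt_nonneg _) (norm_nonneg _)
    (Finset.sum_nonneg fun _ _ => by positivity) (norm_nonneg _) hwn
    (by rwa [Real.sq_sqrt hD0]) (by rwa [Real.sq_sqrt hD0])
  rw [Real.sq_sqrt hD0] at hmain
  rw [Finset.sum_sub_distrib, ← Finset.mul_sum, ← hD, hsplit, hwn]
  nlinarith

end InnerProduct

theorem traceNorm_eq_sum_abs_eigenvalues {n : Type*} [Fintype n] [DecidableEq n]
    {A : Matrix n n ℂ} (hA : A.IsHermitian) :
    traceNorm A = ∑ i, |hA.eigenvalues i| := by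
  have hchar : (Aᴴ * A).charpoly =
      ∏ i, (Polynomial.X - Polynomial.C ((hA.eigenvalues i ^ 2 : ℝ) : ℂ)) := by
    have h2 : Aᴴ * A = Unitary.conjStarAlgAut ℂ _ hA.eigenvectorUnitary
        (Matrix.diagonal fun i => ((hA.eigenvalues i ^ 2 : ℝ) : ℂ)) := by
      rw [hA.eq]
      conv_lhs => rw [hA.spectral_theorem, ← map_mul, Matrix.diagonal_mul_diagonal]
      simp [pow_two]
    rw [h2, Unitary.conjStarAlgAut_apply, Matrix.charpoly_mul_comm, ← mul_assoc]
    simp [Matrix.charpoly_diagonal]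
  have hroots := (Matrix.posSemidef_conjTranspose_mul_self A).1.roots_charpoly_eq_eigenvalues
  rw [hchar, Polynomial.roots_prod _ _
    (Finset.prod_ne_zero_iff.2 fun _ _ => Polynomial.X_sub_C_ne_zero _)] at hroots
  have := congrArg (fun m => (m.map fun z : ℂ => √z.re).sum) hroots
  simp only [Polynomial.roots_X_sub_C, Multiset.bind_singleton, Multiset.map_map] at this
  simp only [Function.comp_def, Complex.ofReal_re, Real.sqrt_sq_eq_abs] at this
  exact this.symm

theorem half_traceNorm_eq_sum_neg_eigenvalues {n : Type*} [Fintype n] [DecidableEq n]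
    {A : Matrix n n ℂ} (hA : A.IsHermitian) (htr : A.trace = 0) :
    (1 / 2 : ℝ) * traceNorm A =
      ∑ i ∈ Finset.univ.filter (fun i => hA.eigenvalues i < 0), -hA.eigenvalues i := by
  have h0 : ∑ i, hA.eigenvalues i = 0 := by
    rw [hA.trace_eq_sum_eigenvalues] at htr
    exact Complex.ofReal_injective (by simpa using htr)
  rw [traceNorm_eq_sum_abs_eigenvalues hA, Finset.sum_filter,
    ← sub_zero (∑ i, |_|)]
  nth_rw 1 [← h0]
  rw [← Finset.sum_sub_distrib, Finset.mul_sum]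
  refine Finset.sum_congr rfl fun i _ => ?_
  split_ifs with h
  · rw [abs_of_neg h]; ring
  · rw [abs_of_nonneg (not_lt.1 h)]; ring

section Vectors

theorem pureState_eq_vecMulVec {n : Type*} (v : n → ℂ) :
    pureState v = Matrix.vecMulVec v (star v) := rfl

theorem isHermitian_pureState {n : Type*} (v : n → ℂ) :
    (pureState v).IsHermitian := by
  rw [pureState_eq_vecMulVec, Matrix.IsHermitian, Matrix.conjTranspose_vecMulVec, star_star]

variable {n : Type*} [Fintype n]

theorem mul_pureState_mul_conjTranspose (M : Matrix n n ℂ) (v : n → ℂ) :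
    M * pureState v * Mᴴ = pureState (M *ᵥ v) := by
  rw [pureState_eq_vecMulVec, pureState_eq_vecMulVec, Matrix.mul_vecMulVec,
    Matrix.vecMulVec_mul, Matrix.star_mulVec]

theorem expval_eq_dotProduct (M : Matrix n n ℂ) (v : n → ℂ) :
    expval M v = star v ⬝ᵥ (M *ᵥ v) := by
  simp only [expval, dotProduct, Matrix.mulVec, Finset.mul_sum, mul_assoc]
  rfl

theorem norm_toLp_sq (v : n → ℂ) :
    ‖(WithLp.toLp 2 v : EuclideanSpace ℂ n)‖ ^ 2 = ∑ a, Complex.normSq (v a) := by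
  simp [EuclideanSpace.norm_sq_eq, Complex.normSq_eq_norm_sq]

theorem star_dotProduct_self (v : n → ℂ) :
    star v ⬝ᵥ v = ((∑ a, Complex.normSq (v a) : ℝ) : ℂ) := by
  simp [dotProduct, Complex.normSq_eq_conj_mul_self]

theorem expval_pureState (v x : n → ℂ) :
    expval (pureState v) x =
      ((‖⟪(WithLp.toLp 2 x : EuclideanSpace ℂ n), WithLp.toLp 2 v⟫_ℂ‖ ^ 2 : ℝ) : ℂ) := by
  rw [expval_eq_dotProduct, pureState_eq_vecMulVec, Matrix.vecMulVec_mulVec,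
    EuclideanSpace.inner_toLp_toLp, Complex.ofReal_pow, ← Complex.mul_conj']
  have : star v ⬝ᵥ x = starRingEnd ℂ (v ⬝ᵥ star x) := by
    rw [starRingEnd_apply, Matrix.star_dotProduct, dotProduct_comm]
  rw [this, dotProduct_smul, dotProduct_comm v, op_smul_eq_mul]

theorem trace_pureState (v : n → ℂ) :
    (pureState v).trace = ((‖(WithLp.toLp 2 v : EuclideanSpace ℂ n)‖ ^ 2 : ℝ) : ℂ) := by
  rw [norm_toLp_sq, pureState_eq_vecMulVec, Matrix.trace_vecMulVec, dotProduct_comm,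
    star_dotProduct_self]

theorem expval_sum {B : Type*} (s : Finset B) (M : B → Matrix n n ℂ) (v : n → ℂ) :
    expval (∑ b ∈ s, M b) v = ∑ b ∈ s, expval (M b) v := by
  simp only [expval_eq_dotProduct, Matrix.sum_mulVec, dotProduct_sum]

theorem expval_sub (M M' : Matrix n n ℂ) (v : n → ℂ) :
    expval (M - M') v = expval M v - expval M' v := by
  simp only [expval_eq_dotProduct, Matrix.sub_mulVec, dotProduct_sub]

theorem expval_conjTranspose_mul_mul (M N : Matrix n n ℂ) (v : n → ℂ) :
    expval (Nᴴ * M * N) v = expval M (N *ᵥ v) := by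
  simp only [expval_eq_dotProduct, ← Matrix.mulVec_mulVec, Matrix.star_mulVec,
    Matrix.dotProduct_mulVec, Matrix.vecMul_vecMul, Matrix.mul_assoc]

theorem expval_one [DecidableEq n] (v : n → ℂ) :
    expval (1 : Matrix n n ℂ) v =
      ((‖(WithLp.toLp 2 v : EuclideanSpace ℂ n)‖ ^ 2 : ℝ) : ℂ) := by
  rw [expval_eq_dotProduct, Matrix.one_mulVec, star_dotProduct_self, norm_toLp_sq]

end Vectors

/-- The trace distance between a mixture `∑ b, |v b⟩⟨v b|` and a pure state `|t⟩⟨t|`. -/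
theorem half_traceNorm_sum_pureState_sub_le {n B : Type*} [Fintype n] [DecidableEq n] [Fintype B]
    (v : B → n → ℂ) (t : n → ℂ) (ht : ‖(WithLp.toLp 2 t : EuclideanSpace ℂ n)‖ = 1)
    (hv : ∑ b, ‖(WithLp.toLp 2 (v b) : EuclideanSpace ℂ n)‖ ^ 2 = 1) :
    (1 / 2 : ℝ) * traceNorm (∑ b, pureState (v b) - pureState t) ≤
      ∑ b, ‖(WithLp.toLp 2 (v b) : EuclideanSpace ℂ n)‖ *
        ‖(WithLp.toLp 2 (v b) : EuclideanSpace ℂ n) -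
          ⟪(WithLp.toLp 2 t : EuclideanSpace ℂ n), WithLp.toLp 2 (v b)⟫_ℂ • WithLp.toLp 2 t‖ := by
  have hA : (∑ b, pureState (v b) - pureState t).IsHermitian := by
    refine Matrix.IsHermitian.sub ?_ (isHermitian_pureState t)
    rw [Matrix.IsHermitian, Matrix.conjTranspose_sum]
    exact Finset.sum_congr rfl fun b _ => isHermitian_pureState (v b)
  have htr : (∑ b, pureState (v b) - pureState t).trace = 0 := by
    simp only [Matrix.trace_sub, Matrix.trace_sum, trace_pureState, ← Complex.ofReal_sum, hv, ht]
    simp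
  rw [half_traceNorm_eq_sum_neg_eigenvalues hA htr]
  have heig : ∀ j, -hA.eigenvalues j =
      ∑ b, (‖(WithLp.toLp 2 (v b) : EuclideanSpace ℂ n)‖ ^ 2 *
        ‖⟪hA.eigenvectorBasis j, WithLp.toLp 2 t⟫_ℂ‖ ^ 2 -
        ‖⟪hA.eigenvectorBasis j, WithLp.toLp 2 (v b)⟫_ℂ‖ ^ 2) := by
    intro j
    rw [hA.eigenvalues_eq, ← expval_eq_dotProduct, expval_sub, expval_sum]
    simp only [expval_pureState, ← Complex.ofReal_sum, ← Complex.ofReal_sub]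
    rw [Finset.sum_sub_distrib, ← Finset.sum_mul, hv, one_mul, RCLike.re_eq_complex_re,
      Complex.ofReal_re, neg_sub]
  simp only [heig]
  rw [Finset.sum_comm]
  exact Finset.sum_le_sum fun b _ =>
    sum_norm_sq_inner_sub_le hA.eigenvectorBasis.orthonormal _ ht _

/-- The vectors `S_g |t⟩` carry total probability one. -/
theorem sum_normSq_sandwichOp_mulVec {p t B : Type*} [Fintype p] [DecidableEq p]
    [Fintype t] [DecidableEq t] [Fintype B]
    (S : Matrix (p × t) (p × t) ℂ) (hS : Sᴴ * S = 1)
    (i : p → ℂ) (hi : ∑ x, Complex.normSq (i x) = 1)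
    (tv : t → ℂ) (htv : ∑ a, Complex.normSq (tv a) = 1) (g : B → p → ℂ)
    (hcomplete : ∀ x y, ∑ b, g b x * (starRingEnd ℂ) (g b y) = if x = y then 1 else 0) :
    ∑ b, ∑ a, Complex.normSq ((sandwichOp S (g b) i *ᵥ tv) a) = 1 := by
  set ψ : p × t → ℂ := fun q => i q.1 * tv q.2 with hψ
  have hφ : ∑ q, Complex.normSq ((S *ᵥ ψ) q) = 1 := by
    have h : star (S *ᵥ ψ) ⬝ᵥ (S *ᵥ ψ) = star ψ ⬝ᵥ ψ := by
      rw [Matrix.star_mulVec, Matrix.dotProduct_mulVec, Matrix.vecMul_vecMul, hS,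
        Matrix.vecMul_one]
    rw [star_dotProduct_self, star_dotProduct_self, Complex.ofReal_inj] at h
    rw [h, Fintype.sum_prod_type]
    simp only [hψ, map_mul, ← Finset.mul_sum, htv, mul_one, hi]
  have hsand : ∀ b a, (sandwichOp S (g b) i *ᵥ tv) a =
      ∑ x, starRingEnd ℂ (g b x) * (S *ᵥ ψ) (x, a) := by
    intro b a
    simp only [Matrix.mulVec, dotProduct, sandwichOp, Matrix.of_apply, Finset.sum_mul,
      Finset.mul_sum, hψ, Fintype.sum_prod_type]
    rw [Finset.sum_comm]
    refine Finset.sum_congr rfl fun x _ => ?_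
    rw [Finset.sum_comm]
    refine Finset.sum_congr rfl fun y _ => Finset.sum_congr rfl fun c _ => ?_
    ring
  rw [← hφ, Fintype.sum_prod_type, Finset.sum_comm, Finset.sum_comm (s := Finset.univ (α := p))]
  refine Finset.sum_congr rfl fun a _ => ?_
  apply Complex.ofReal_injective
  simp only [hsand, Complex.ofReal_sum, Complex.normSq_eq_conj_mul_self, map_sum, map_mul,
    Complex.conj_conj, Finset.sum_mul_sum]
  rw [Finset.sum_comm]
  refine Finset.sum_congr rfl fun x _ => ?_
  rw [Finset.sum_comm]
  have : ∀ y, ∑ b, g b x * starRingEnd ℂ ((S *ᵥ ψ) (x, a)) *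
      (starRingEnd ℂ (g b y) * (S *ᵥ ψ) (y, a)) =
      (if x = y then 1 else 0) * (starRingEnd ℂ ((S *ᵥ ψ) (x, a)) * (S *ᵥ ψ) (y, a)) := by
    intro y
    rw [← hcomplete, Finset.sum_mul]
    exact Finset.sum_congr rfl fun b _ => by ring
  simp [this]

/-- Lemma 5a of the paper. For a unitary `S` on `H_p ⊗ H_t`, unit vectors
`|i⟩ ∈ H_p` and `|t⟩ ∈ H_t`, and an orthonormal basis `{|g⟩}_{g∈B}` of `H_p` containing
`|i⟩`, with Kraus operators `S_g = (⟨g| ⊗ I) S (|i⟩ ⊗ I)`, final states `ρ_f = |t⟩⟨t|`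
and `ρ_f' = Σ_g S_g |t⟩⟨t| S_g†`, orthogonal scattering probabilities
`p_⊥ = 1 − ⟨t|ρ_f'|t⟩` and `p_⊥^{i→i} = ⟨t|S_i†(I − |t⟩⟨t|)S_i|t⟩`, and scattering
probability `p_s = 1 − ‖S_i|t⟩‖²`, the trace distance between the two final states obeys
`(1/2)‖ρ_f' − ρ_f‖₁ ≤ √(p_⊥^{i→i}) + √(p_⊥ · p_s)`. -/
theorem trace_distance_final_states_bound
    {p t : Type*} [Fintype p] [DecidableEq p] [Nonempty p]
    [Fintype t] [DecidableEq t] [Nonempty t]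
    (S : Matrix (p × t) (p × t) ℂ) (hS : Sᴴ * S = 1 ∧ S * Sᴴ = 1)
    (i : p → ℂ) (hi : ∑ x, Complex.normSq (i x) = 1)
    (tv : t → ℂ) (htv : ∑ a, Complex.normSq (tv a) = 1)
    {B : Type*} [Fintype B] [DecidableEq B] (g : B → p → ℂ)
    (horth : ∀ b b', ∑ x, (starRingEnd ℂ) (g b x) * g b' x = if b = b' then 1 else 0)
    (hcomplete : ∀ x y, ∑ b, g b x * (starRingEnd ℂ) (g b y) = if x = y then 1 else 0)
    (b₀ : B) (hb₀ : g b₀ = i)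
    (Si : Matrix t t ℂ) (hSi : Si = sandwichOp S i i)
    (ρf ρf' : Matrix t t ℂ)
    (hρf : ρf = pureState tv)
    (hρf' : ρf' = ∑ b, sandwichOp S (g b) i * pureState tv * (sandwichOp S (g b) i)ᴴ)
    (pperp : ℝ) (hpperp : pperp = 1 - (expval ρf' tv).re)
    (pii : ℝ)
    (hpii : pii = (expval (Siᴴ * ((1 : Matrix t t ℂ) - pureState tv) * Si) tv).re)
    (ps : ℝ) (hps : ps = 1 - ∑ a, Complex.normSq (Si.mulVec tv a)) :
    (1 / 2 : ℝ) * traceNorm (ρf' - ρf) ≤ Real.sqrt pii + Real.sqrt (pperp * ps) := by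
  subst hb₀ hρf hpperp hpii hps hρf' hSi
  simp only [mul_pureState_mul_conjTranspose, expval_conjTranspose_mul_mul, expval_sub,
    expval_one, expval_sum, expval_pureState, ← Complex.ofReal_sum, ← Complex.ofReal_sub,
    Complex.ofReal_re, ← norm_toLp_sq]
  set T : EuclideanSpace ℂ t := WithLp.toLp 2 tv with hT
  have hT1 : ‖T‖ = 1 := by
    rw [← sq_eq_sq₀ (norm_nonneg _) zero_le_one, one_pow, hT, norm_toLp_sq, htv]
  have hV1 := sum_normSq_sandwichOp_mulVec S hS.1 (g b₀) hi tv htv g hcomplete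
  simp only [← norm_toLp_sq] at hV1
  refine (half_traceNorm_sum_pureState_sub_le _ tv hT1 hV1).trans ?_
  rw [← hT]
  set V : B → EuclideanSpace ℂ t :=
    fun b => WithLp.toLp 2 (sandwichOp S (g b) (g b₀) *ᵥ tv) with hV
  change ∑ b, ‖V b‖ ^ 2 = 1 at hV1
  change ∑ b, ‖V b‖ * ‖V b - ⟪T, V b⟫_ℂ • T‖ ≤ √(‖V b₀‖ ^ 2 - ‖⟪V b₀, T⟫_ℂ‖ ^ 2) +
    √((1 - ∑ b, ‖⟪T, V b⟫_ℂ‖ ^ 2) * (1 - ‖V b₀‖ ^ 2))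
  have hperp : 1 - ∑ b, ‖⟪T, V b⟫_ℂ‖ ^ 2 = ∑ b, ‖V b - ⟪T, V b⟫_ℂ • T‖ ^ 2 := by
    simp only [norm_sq_sub_inner_smul hT1, Finset.sum_sub_distrib, hV1]
  have hsplit := Finset.add_sum_erase Finset.univ (fun b => ‖V b‖ ^ 2) (Finset.mem_univ b₀)
  simp only [hV1] at hsplit
  have hrest : 0 ≤ ∑ b ∈ Finset.univ.erase b₀, ‖V b‖ ^ 2 :=
    Finset.sum_nonneg fun _ _ => by positivity
  rw [norm_inner_symm (V b₀) T, ← norm_sq_sub_inner_smul hT1, Real.sqrt_sq (norm_nonneg _),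
    hperp, ← Finset.add_sum_erase Finset.univ _ (Finset.mem_univ b₀)]
  refine add_le_add (mul_le_of_le_one_left (norm_nonneg _) ?_) ?_
  · exact (sq_le_one_iff₀ (norm_nonneg _)).1 (by linarith)
  · refine (Real.sum_mul_le_sqrt_mul_sqrt _ _ _).trans ?_
    rw [mul_comm, Real.sqrt_mul (Finset.sum_nonneg fun _ _ => by positivity)]
    refine mul_le_mul (Real.sqrt_le_sqrt ?_) (Real.sqrt_le_sqrt (by linarith))
      (Real.sqrt_nonneg _) (Real.sqrt_nonneg _)
    exact Finset.sum_le_sum_of_subset_of_nonneg (Finset.erase_subset _ _)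
      fun _ _ _ => by positivity

end Paper
end
end
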